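/- Let d ≥ 1 and n ≥ 1, and let Z and U be real symmetric positive semidefinite (d+n)×(d+n) matrices satisfying the complementarity condition ZU = 0 (the zero matrix). Assume that the top-left d×d principal submatrix of Z is the d×d identity matrix I_d and that rank(U) = n. Then rank(Z) = d. -/

import Mathlib

section

variable {l m n o K : Type*}

theorem rank_toBlocks₁₁_le [CommSemiring K] [StrongRankCondition K] [Fintype m] [Fintype n]
    (A : Matrix (l ⊕ o) (m ⊕ n) K) : A.toBlocks₁₁.rank ≤ A.rank :=
  A.rank_submatrix_le Sum.inl Sum.inl

theorem rank_primal_eq_of_complementarity_general [Field K] [Finite l] [Fintype m] [DecidableEq m]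
    [Fintype n] [Fintype o] {Z : Matrix (m ⊕ l) (m ⊕ n) K} {U : Matrix (m ⊕ n) o K}
    (hcompl : Z * U = 0) (hblock : IsUnit Z.toBlocks₁₁) (hrankU : Fintype.card n ≤ U.rank) :
    Z.rank = Fintype.card m := by
  apply le_antisymm
  · have hsum : Z.rank + U.rank ≤ Fintype.card m + Fintype.card n := by
      simpa using Matrix.rank_add_rank_le_card_of_mul_eq_zero hcompl
    lia
  · calc
      Fintype.card m = Z.toBlocks₁₁.rank := (Matrix.rank_of_isUnit _ hblock).symm
      _ ≤ Z.rank := rank_toBlocks₁₁_le Z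

end

/-- Let `Z` and `U` be real symmetric positive semidefinite
`(d+n)×(d+n)` matrices with `ZU = 0` (complementarity).  If the top-left `d×d`
principal submatrix of `Z` is the identity and `rank(U) = n`, then `rank(Z) = d`.
(The `(d+n)`-element index type is realized as `Fin d ⊕ Fin n`, so the top-left
`d×d` block is `Z.toBlocks₁₁`.) -/
theorem rank_primal_eq_of_complementarity (d n : ℕ) (hd : 1 ≤ d) (hn : 1 ≤ n)
    (Z U : Matrix (Fin d ⊕ Fin n) (Fin d ⊕ Fin n) ℝ)
    (hZ : Z.PosSemidef) (hU : U.PosSemidef)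
    (hcompl : Z * U = 0)
    (hblock : Z.toBlocks₁₁ = (1 : Matrix (Fin d) (Fin d) ℝ))
    (hrankU : U.rank = n) :
    Z.rank = d := by
  simpa using rank_primal_eq_of_complementarity_general hcompl
    (hblock ▸ isUnit_one) (by simp [hrankU])
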